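/- Assume that the dominating number 𝔡 is regular (cf(𝔡) = 𝔡). Then for each 𝔡-unbounded set X ⊆ [ω]^ω there exist a free ultrafilter U on ℕ and a U-scale Y ⊆ [ω]^ω such that the product space X × (Y ∪ Fin) is not Menger. -/

import Mathlib

open Cardinal

/-- Subsets of `ℕ` are identified with their characteristic functions `ℕ → Bool`;
this way `P(ℕ)` is the Cantor cube `2^ℕ`, carrying the product topology. -/
abbrev CSet : Type := ℕ → Bool

/-- The subset of `ℕ` coded by `a : CSet`. -/
def supp (a : CSet) : Set ℕ := {n | a n = true}

/-- `a ∈ [ω]^ω`: the coded set is infinite. -/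
def InfS (a : CSet) : Prop := (supp a).Infinite

/-- The increasing enumeration of the set coded by `a`. -/
noncomputable def enum (a : CSet) : ℕ → ℕ := Nat.nth (fun n => a n = true)

/-- `a ≤* b`: the set `[a ≤ b]` (computed on increasing enumerations) is cofinite. -/
def LeStarS (a b : CSet) : Prop := {n | ¬ enum a n ≤ enum b n}.Finite

/-- `a ≤_U b`: the set `[a ≤ b]` (computed on increasing enumerations) is in `U`. -/
def LeUS (U : Ultrafilter ℕ) (a b : CSet) : Prop := {n | enum a n ≤ enum b n} ∈ U

/-- An ultrafilter is free if it extends the cofinite filter. -/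
def Free (U : Ultrafilter ℕ) : Prop := (U : Filter ℕ) ≤ Filter.cofinite

/-- A subset of `[ω]^ω` is bounded if some element of `[ω]^ω` `≤*`-dominates it. -/
def BoundedS (A : Set CSet) : Prop := ∃ b : CSet, InfS b ∧ ∀ a ∈ A, LeStarS a b

/-- A subset of `[ω]^ω` is `≤_U`-bounded if some element of `[ω]^ω` `≤_U`-dominates it. -/
def UBoundedS (U : Ultrafilter ℕ) (A : Set CSet) : Prop :=
  ∃ b : CSet, InfS b ∧ ∀ a ∈ A, LeUS U a b

/-- `D ⊆ [ω]^ω` is dominating if it `≤*`-dominates every element of `[ω]^ω`. -/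
def DominatingS (D : Set CSet) : Prop :=
  (∀ d ∈ D, InfS d) ∧ ∀ a : CSet, InfS a → ∃ d ∈ D, LeStarS a d

/-- `𝔡`: the least cardinality of a dominating subset of `[ω]^ω`. -/
noncomputable def frakDS : Cardinal := sInf {c | ∃ D : Set CSet, DominatingS D ∧ c = #D}

/-- `𝔟(U)`: the least cardinality of a `≤_U`-unbounded subset of `[ω]^ω`. -/
noncomputable def frakBUS (U : Ultrafilter ℕ) : Cardinal :=
  sInf {c | ∃ A : Set CSet, (∀ a ∈ A, InfS a) ∧ ¬ UBoundedS U A ∧ c = #A}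

/-- `Y ⊆ [ω]^ω` is a `U`-scale if for every `b ∈ [ω]^ω` the relation `b ≤_U y` holds
for all but fewer than `𝔟(U)` many `y ∈ Y`. -/
def UScaleS (U : Ultrafilter ℕ) (Y : Set CSet) : Prop :=
  (∀ y ∈ Y, InfS y) ∧
    ∀ b : CSet, InfS b → #({y ∈ Y | ¬ LeUS U b y} : Set CSet) < frakBUS U

/-- `Fin`: the family of (codes of) finite subsets of `ℕ`. -/
def FinS : Set CSet := {a | (supp a).Finite}

/-- `2u := {2n : n ∈ u}` on codes. -/
def double (x : CSet) : CSet := fun n => if n % 2 = 0 then x (n / 2) else false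

/-- `a ⊎ b := {2k : k ∈ a} ∪ {2k+1 : k ∈ b}` on codes. -/
def uplus (a b : CSet) : CSet := fun n => if n % 2 = 0 then a (n / 2) else b (n / 2)

/-- Symmetric difference `⊕` on codes. -/
def symmD (a b : CSet) : CSet := fun n => xor (a n) (b n)

/-- `2U`: the ultrafilter generated by `{2u : u ∈ U}`, i.e. the pushforward of `U`
under `n ↦ 2n`. -/
def twoU (U : Ultrafilter ℕ) : Ultrafilter ℕ := U.map (fun n => 2 * n)

/-- A space is Menger if for every sequence of open covers there are finite
subfamilies whose unions form a cover. -/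
def Menger (Z : Type*) [TopologicalSpace Z] : Prop :=
  ∀ 𝒰 : ℕ → Set (Set Z), (∀ n, (∀ u ∈ 𝒰 n, IsOpen u) ∧ ⋃₀ 𝒰 n = Set.univ) →
    ∃ F : ℕ → Set (Set Z), (∀ n, F n ⊆ 𝒰 n ∧ (F n).Finite) ∧ (⋃ n, ⋃₀ F n) = Set.univ

/-! ### Increasing enumerations -/

theorem InfS.enum_strictMono {a : CSet} (ha : InfS a) : StrictMono (enum a) :=
  Nat.nth_strictMono ha

theorem InfS.enum_lt_iff {a : CSet} (ha : InfS a) {n m : ℕ} :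
    enum a n < m ↔ n < Nat.count (fun i => a i = true) m :=
  (Nat.lt_nth_iff_count_lt ha).symm

/-- Every function is pointwise dominated by the enumeration of an infinite set. -/
theorem exists_infS_le_enum (f : ℕ → ℕ) : ∃ a : CSet, InfS a ∧ ∀ n, f n ≤ enum a n := by
  classical
  set g : ℕ → ℕ := fun n => ∑ i ∈ Finset.range (n + 1), (f i + 1) with hg
  have hmono : StrictMono g := strictMono_nat_of_lt_succ fun n => by
    simp only [hg]
    rw [Finset.sum_range_succ _ (n + 1)]
    omega
  let a : CSet := fun n => decide (n ∈ Set.range g)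
  have hsupp : supp a = Set.range g := by
    ext n
    simp [supp, a]
  have ha : InfS a := by
    rw [InfS, hsupp]
    exact Set.infinite_range_of_injective hmono.injective
  refine ⟨a, ha, fun n => ?_⟩
  have hfg : f n ≤ g n := by
    simp only [hg]
    rw [Finset.sum_range_succ]
    omega
  have hrange : Set.range (enum a) = Set.range g := by
    rw [← hsupp]
    exact Nat.range_nth_of_infinite ha
  rw [(ha.enum_strictMono.range_inj hmono).1 hrange]
  exact hfg

theorem uplus_odd (a b : CSet) (k : ℕ) : uplus a b (2 * k + 1) = b k := by
  have : (2 * k + 1) / 2 = k := by omega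
  simp [uplus, this, Nat.add_mod]

theorem count_uplus (a b : CSet) (m : ℕ) :
    Nat.count (fun i => uplus a b i = true) (2 * m) =
      Nat.count (fun i => a i = true) m + Nat.count (fun i => b i = true) m := by
  induction m with
  | zero => simp
  | succ m ih =>
    have h0 : uplus a b (2 * m) = a m := by simp [uplus]
    rw [show 2 * (m + 1) = 2 * m + 1 + 1 by ring, Nat.count_succ, Nat.count_succ, ih,
      Nat.count_succ, Nat.count_succ, h0, uplus_odd]
    omega

theorem infS_of_odd {c b : CSet} (hb : InfS b) (h : ∀ k, c (2 * k + 1) = b k) : InfS c := by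
  refine (hb.image (f := fun k => 2 * k + 1) fun i _ j _ hij => by simpa using hij).mono ?_
  rintro _ ⟨k, hk, rfl⟩
  exact (h k).trans hk

theorem infS_uplus {a b : CSet} (hb : InfS b) : InfS (uplus a b) :=
  infS_of_odd hb (uplus_odd a b)

theorem enum_half_le_enum_uplus {a b : CSet} (ha : InfS a) (hb : InfS b)
    (hab : ∀ n, enum a n ≤ enum b n) (n : ℕ) : enum a (n / 2) ≤ enum (uplus a b) n := by
  by_contra! h
  have h1 := (infS_uplus (a := a) hb).enum_lt_iff.1 (Nat.lt_succ_self (enum (uplus a b) n))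
  have h2 := h1.trans_le (Nat.count_monotone (fun i => uplus a b i = true)
    (show _ ≤ 2 * (enum (uplus a b) n).succ by omega))
  rw [count_uplus] at h2
  have h3 := mt ha.enum_lt_iff.2
    (show ¬ enum a (n / 2) < (enum (uplus a b) n).succ by omega)
  have h4 := mt hb.enum_lt_iff.2
    (show ¬ enum b (n / 2) < (enum (uplus a b) n).succ by have := hab (n / 2); omega)
  omega

theorem enum_le_enum_uplus_empty {b : CSet} (hb : InfS b) (n : ℕ) :
    enum b n ≤ enum (uplus (fun _ => false) b) n := by
  by_contra! h
  set c := uplus (fun _ => false) b with hc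
  have h1 := (infS_uplus (a := fun _ => false) hb).enum_lt_iff.1 (Nat.lt_succ_self (enum c n))
  have h2 := h1.trans_le (Nat.count_monotone (fun i => uplus (fun _ => false) b i = true)
    (show _ ≤ 2 * (enum c n).succ by omega))
  rw [count_uplus] at h2
  have h3 := mt hb.enum_lt_iff.2 (show ¬ enum b n < (enum c n).succ by omega)
  have h4 : Nat.count (fun _ => false = true) (enum c n).succ = 0 := by simp
  omega

theorem symmD_double_uplus (a b : CSet) :
    symmD (double a) (uplus a b) = uplus (fun _ => false) b := by
  funext n
  by_cases h : n % 2 = 0 <;> simp [symmD, double, uplus, h]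

theorem infS_symmD_double_uplus (x a : CSet) {b : CSet} (hb : InfS b) :
    InfS (symmD (double x) (uplus a b)) :=
  infS_of_odd hb fun k => by
    rw [symmD, uplus_odd]
    simp [double, Nat.add_mod]

theorem infS_symmD_double_fin {x f : CSet} (hx : InfS x) (hf : f ∈ FinS) :
    InfS (symmD (double x) f) := by
  have h : ((fun k => 2 * k) '' supp x).Infinite :=
    hx.image fun i _ j _ hij => by simpa using hij
  refine (h.sdiff hf).mono ?_
  rintro _ ⟨⟨k, hk, rfl⟩, hkf⟩
  have hk' : x k = true := hk
  have hkf' : f (2 * k) = false := by simpa [supp] using hkf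
  simp [supp, symmD, double, hk', hkf']

/-! ### The dominating number -/

theorem exists_dominatingS_mk : ∃ D : Set CSet, DominatingS D ∧ frakDS = #D :=
  csInf_mem (s := {c | ∃ D : Set CSet, DominatingS D ∧ c = #D})
    ⟨_, {a | InfS a}, ⟨fun _ h => h, fun a ha => ⟨a, ha, by simp [LeStarS]⟩⟩, rfl⟩

theorem aleph0_le_frakDS : ℵ₀ ≤ frakDS := by
  obtain ⟨D, hD, hcard⟩ := exists_dominatingS_mk
  rw [hcard, Cardinal.aleph0_le_mk_iff, Set.infinite_coe_iff]
  intro hfin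
  obtain ⟨a, ha, hle⟩ := exists_infS_le_enum fun n => ∑ d ∈ hfin.toFinset, enum d n + 1
  obtain ⟨d, hd, hfinite⟩ := hD.2 a ha
  refine Set.infinite_univ (hfinite.subset fun n _ => ?_)
  have h1 : enum d n ≤ ∑ d ∈ hfin.toFinset, enum d n :=
    Finset.single_le_sum (f := fun d => enum d n) (fun _ _ => Nat.zero_le _)
      (hfin.mem_toFinset.2 hd)
  have h2 := hle n
  simp only [Set.mem_ofPred_eq, not_le]
  omega

theorem mk_finset_lt_of_lt {α : Type} {κ : Cardinal} (hκ : ℵ₀ ≤ κ) (h : #α < κ) :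
    #(Finset α) < κ := by
  cases finite_or_infinite α
  · exact (Cardinal.lt_aleph0_of_finite _).trans_le hκ
  · rwa [Cardinal.mk_finset_of_infinite]

/-! ### Choosing elements of an unbounded family -/

/-- Functions that are below `B` at half the argument, on almost all of an infinite set, are
bounded. -/
theorem boundedS_of_finite_half {A : Set CSet} (hA : ∀ a ∈ A, InfS a) {F : Set ℕ}
    (hF : F.Infinite) (B : ℕ → ℕ)
    (h : ∀ a ∈ A, {n ∈ F | B n < enum a (n / 2)}.Finite) : BoundedS A := by
  choose e he hle using fun m => hF.exists_gt (2 * m)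
  obtain ⟨b, hb, hBb⟩ := exists_infS_le_enum fun m => B (e m)
  refine ⟨b, hb, fun a ha => ?_⟩
  obtain ⟨N, hN⟩ := (h a ha).bddAbove
  refine (Set.finite_Iic N).subset fun m hm => ?_
  by_contra hmN
  simp only [Set.mem_Iic, not_le] at hmN
  have hlt := hle m
  have hbound : enum a (e m / 2) ≤ B (e m) := by
    by_contra! hc
    have := hN (show e m ∈ {n ∈ F | B n < enum a (n / 2)} from ⟨he m, hc⟩)
    omega
  refine hm ?_
  calc enum a m ≤ enum a (e m / 2) := (hA a ha).enum_strictMono.monotone (by omega)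
    _ ≤ _ := hbound
    _ ≤ _ := hBb m

theorem exists_mem_forall_infinite (hreg : frakDS.IsRegular) {X : Set CSet}
    (hXinf : ∀ x ∈ X, InfS x) (hXcard : frakDS ≤ #X)
    (hXunb : ∀ B ⊆ X, BoundedS B → #B < frakDS) {J : Type} (hJ : #J < frakDS)
    (F : J → Set ℕ) (B : J → ℕ → ℕ) :
    ∃ x ∈ X, ∀ j, (F j).Infinite → {n ∈ F j | B j n < enum x (n / 2)}.Infinite := by
  by_contra! hcon
  let A : J → Set CSet := fun j =>
    {x ∈ X | (F j).Infinite ∧ {n ∈ F j | B j n < enum x (n / 2)}.Finite}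
  have hA : ∀ j, #(A j) < frakDS := fun j => by
    refine hXunb _ (fun x hx => hx.1) ?_
    by_cases hF : (F j).Infinite
    · exact boundedS_of_finite_half (fun x hx => hXinf x hx.1) hF (B j) fun x hx => hx.2.2
    · obtain ⟨b, hb, -⟩ := exists_infS_le_enum fun _ => 0
      exact ⟨b, hb, fun x hx => absurd hx.2.1 hF⟩
  have hsub : X ⊆ ⋃ j, A j := fun x hx => by
    obtain ⟨j, hj, hfin⟩ := hcon x hx
    exact Set.mem_iUnion.2 ⟨j, hx, hj, by simpa using hfin⟩
  have hlt : #(⋃ j, A j) < frakDS :=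
    (Cardinal.mk_iUnion_le_sum_mk).trans_lt (Cardinal.sum_lt_of_isRegular hreg hJ hA)
  exact absurd (hXcard.trans (Cardinal.mk_le_mk_of_subset hsub)) hlt.not_ge

/-- Transfinite recursion for a relation that only depends on the previous values. -/
theorem exists_forall_rel_of_wellFoundedLT {ι C : Type*} [LinearOrder ι] [WellFoundedLT ι]
    [Inhabited C] (R : ι → (ι → C) → C → Prop)
    (hcongr : ∀ i f g x, (∀ j < i, f j = g j) → R i f x → R i g x)
    (hex : ∀ i f, ∃ x, R i f x) : ∃ f : ι → C, ∀ i, R i f (f i) := by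
  classical
  choose next hnext using hex
  let step : ∀ i, (∀ j, j < i → C) → C := fun i p =>
    next i fun j => if h : j < i then p j h else default
  let f : ι → C := (wellFounded_lt (α := ι)).fix step
  refine ⟨f, fun i => ?_⟩
  have hf : f i = step i fun j _ => f j := WellFounded.fix_eq _ _ _
  rw [hf]
  exact hcongr i _ f _ (fun j hj => by simp [hj]) (hnext i _)

/-- Sequences in an unbounded family along which the sets `[b β < x γ (· / 2)]`, `β ≤ γ`,
have infinite finite intersections. -/
theorem exists_centered_sequence (hreg : frakDS.IsRegular) {X : Set CSet}
    (hXinf : ∀ x ∈ X, InfS x) (hXcard : frakDS ≤ #X)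
    (hXunb : ∀ B ⊆ X, BoundedS B → #B < frakDS)
    {ι : Type} [LinearOrder ι] [WellFoundedLT ι] (hι : ∀ i : ι, #(Set.Iic i) < frakDS)
    (b : ι → ℕ → ℕ) :
    ∃ x : ι → CSet, (∀ i, x i ∈ X) ∧ ∀ s : Finset (ι × ι), (∀ p ∈ s, p.1 ≤ p.2) →
      {n | ∀ p ∈ s, b p.1 n < enum (x p.2) (n / 2)}.Infinite := by
  classical
  obtain ⟨x, hx⟩ := exists_forall_rel_of_wellFoundedLT (ι := ι) (C := CSet)
    (fun i f y => y ∈ X ∧ ∀ s t : Finset (ι × ι), (∀ p ∈ s, p.1 ≤ i ∧ p.2 < i) →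
      (∀ p ∈ t, p.1 ≤ i ∧ p.2 = i) →
      {n | ∀ p ∈ s, b p.1 n < enum (f p.2) (n / 2)}.Infinite →
      {n | (∀ p ∈ s, b p.1 n < enum (f p.2) (n / 2)) ∧
        ∀ p ∈ t, b p.1 n < enum y (n / 2)}.Infinite)
    (fun i f g y hfg h => by
      refine ⟨h.1, fun s t hs ht hinf => ?_⟩
      have heq : ∀ n, (∀ p ∈ s, b p.1 n < enum (f p.2) (n / 2)) ↔
          ∀ p ∈ s, b p.1 n < enum (g p.2) (n / 2) := fun n =>
        forall₂_congr fun p hp => by rw [hfg _ (hs p hp).2]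
      simp only [← heq] at hinf ⊢
      exact h.2 s t hs ht hinf)
    (fun i f => by
      let T := Finset (Set.Iic i × Set.Iic i)
      have hT : #T < frakDS := mk_finset_lt_of_lt hreg.aleph0_le <| by
        rw [Cardinal.mk_prod, Cardinal.lift_id]
        exact Cardinal.mul_lt_of_lt hreg.aleph0_le (hι i) (hι i)
      have hJ : #(T × T) < frakDS := by
        rw [Cardinal.mk_prod, Cardinal.lift_id]
        exact Cardinal.mul_lt_of_lt hreg.aleph0_le hT hT
      obtain ⟨y, hy, hinf⟩ := exists_mem_forall_infinite hreg hXinf hXcard hXunb hJ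
        (fun j => {n | ∀ p ∈ j.1, b p.1 n < enum (f p.2) (n / 2)})
        (fun j n => ∑ p ∈ j.2, b p.1 n)
      refine ⟨y, hy, fun s t hs ht hs' => ?_⟩
      let lift (r : Finset (ι × ι)) : T :=
        r.preimage (Prod.map Subtype.val Subtype.val)
          (Subtype.val_injective.prodMap Subtype.val_injective).injOn
      have mem_lift : ∀ (r : Finset (ι × ι)) q, q ∈ lift r ↔ (q.1.1, q.2.1) ∈ r :=
        fun _ _ => Finset.mem_preimage
      have hF : ∀ n, (∀ p ∈ lift s, b p.1 n < enum (f p.2) (n / 2)) ↔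
          ∀ p ∈ s, b p.1 n < enum (f p.2) (n / 2) := fun n =>
        ⟨fun h p hp => h (⟨p.1, (hs p hp).1⟩, ⟨p.2, (hs p hp).2.le⟩) ((mem_lift _ _).2 hp),
          fun h p hp => h _ ((mem_lift _ _).1 hp)⟩
      have := hinf (lift s, lift t) (by simpa only [hF] using hs')
      refine this.mono fun n hn => ⟨(hF n).1 hn.1, fun p hp => ?_⟩
      refine lt_of_le_of_lt ?_ hn.2
      exact Finset.single_le_sum
        (f := fun q : Set.Iic i × Set.Iic i => b q.1 n) (fun _ _ => Nat.zero_le _)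
        ((mem_lift t (⟨p.1, (ht p hp).1⟩, ⟨p.2, (ht p hp).2.le⟩)).2 hp))
  refine ⟨x, fun i => (hx i).1, fun s => ?_⟩
  induction s using Finset.strongInduction with
  | H s ih =>
    intro hs
    rcases s.eq_empty_or_nonempty with rfl | hne
    · simpa using Set.infinite_univ
    obtain ⟨q, hq, hmax⟩ := s.exists_max_image Prod.snd hne
    have hlt := ih (s.filter fun p => p.2 < q.2)
      (Finset.filter_ssubset.2 ⟨q, hq, lt_irrefl _⟩)
      fun p hp => hs p (Finset.mem_filter.1 hp).1
    refine ((hx q.2).2 (s.filter fun p => p.2 < q.2) (s.filter fun p => p.2 = q.2)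
      (fun p hp => ?_) (fun p hp => ?_) hlt).mono ?_
    · rw [Finset.mem_filter] at hp
      exact ⟨(hs p hp.1).trans hp.2.le, hp.2⟩
    · rw [Finset.mem_filter] at hp
      exact ⟨(hs p hp.1).trans hp.2.le, hp.2⟩
    · rintro n ⟨h1, h2⟩ p hp
      rcases (hmax p hp).lt_or_eq with h | h
      · exact h1 p (Finset.mem_filter.2 ⟨hp, h⟩)
      · rw [h]
        exact h2 p (Finset.mem_filter.2 ⟨hp, h⟩)

/-- A family of subsets of `ℕ` with infinite finite intersections lies in a free ultrafilter. -/
theorem exists_free_ultrafilter {T : Type*} (A : T → Set ℕ)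
    (hA : ∀ s : Finset T, {n | ∀ p ∈ s, n ∈ A p}.Infinite) :
    ∃ U : Ultrafilter ℕ, Free U ∧ ∀ p, A p ∈ U := by
  classical
  have hne : (Filter.cofinite ⊓ ⨅ p, Filter.principal (A p)).NeBot := by
    rw [Filter.inf_neBot_iff]
    intro s hs s' hs'
    obtain ⟨t, ht, hts⟩ := (Filter.hasBasis_iInf_principal_finite A).mem_iff.1 hs'
    obtain ⟨n, hn, hns⟩ := ((hA ht.toFinset).sdiff (Filter.mem_cofinite.1 hs)).nonempty
    refine ⟨n, not_not.1 hns, hts (Set.mem_iInter₂.2 fun p hp => ?_)⟩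
    exact hn p (ht.mem_toFinset.2 hp)
  refine ⟨@Ultrafilter.of _ _ hne, ?_, fun p => ?_⟩
  · exact (@Ultrafilter.of_le _ _ hne).trans inf_le_left
  · exact (@Ultrafilter.of_le _ _ hne).trans (inf_le_right.trans (iInf_le _ p))
      (Filter.mem_principal_self _)

/-! ### The Menger property -/

theorem continuous_count_of_continuous {Z : Type*} [TopologicalSpace Z] {Φ : Z → CSet}
    (hΦ : Continuous Φ) (m : ℕ) :
    Continuous fun z => Nat.count (fun i => Φ z i = true) m := by
  induction m with
  | zero => simpa using continuous_const
  | succ m ih =>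
    simp only [Nat.count_succ]
    have h : Continuous fun z => if Φ z m = true then 1 else 0 :=
      (continuous_of_discreteTopology (f := fun c : Bool => if c = true then 1 else 0)).comp
        ((continuous_apply m).comp hΦ)
    exact ih.add h

/-- A continuous image of a Menger space in `[ω]^ω` is not dominating. -/
theorem Menger.exists_infinite_enum_lt {Z : Type*} [TopologicalSpace Z] (hZ : Menger Z)
    {Φ : Z → CSet} (hΦ : Continuous Φ) (hinf : ∀ z, InfS (Φ z)) :
    ∃ M : ℕ → ℕ, ∀ z, {n | enum (Φ z) n < M n}.Infinite := by
  have key : ∀ k, ∃ M : ℕ → ℕ, ∀ z, ∃ n, enum (Φ z) (n + k) < M n := by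
    intro k
    obtain ⟨F, hF, hcover⟩ := hZ
      (fun n => Set.range fun m => {z | enum (Φ z) (n + k) < m}) fun n => by
        constructor
        · rintro _ ⟨m, rfl⟩
          simp only [(hinf _).enum_lt_iff]
          exact (isOpen_discrete (Set.Ioi (n + k))).preimage
            (continuous_count_of_continuous hΦ m)
        · exact Set.eq_univ_of_forall fun z =>
            ⟨_, ⟨enum (Φ z) (n + k) + 1, rfl⟩, Nat.lt_succ_self _⟩
    have hM : ∀ n, ∃ m, ⋃₀ F n ⊆ {z | enum (Φ z) (n + k) < m} := by
      intro n
      choose! g hg using (hF n).1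
      obtain ⟨m, hm⟩ := ((hF n).2.image g).bddAbove
      refine ⟨m, ?_⟩
      rintro z ⟨u, hu, hz⟩
      rw [← hg hu] at hz
      exact lt_of_lt_of_le hz (hm ⟨u, hu, rfl⟩)
    choose M hM using hM
    refine ⟨M, fun z => ?_⟩
    obtain ⟨n, hn⟩ := Set.mem_iUnion.1 (hcover ▸ Set.mem_univ z)
    exact ⟨n, hM n hn⟩
  choose M hM using key
  refine ⟨fun n => ∑ k ∈ Finset.range (n + 1), M k (n - k), fun z => ?_⟩
  refine Set.infinite_of_not_bddAbove fun ⟨N, hN⟩ => ?_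
  obtain ⟨n, hn⟩ := hM (N + 1) z
  have hle := Finset.single_le_sum (f := fun k => M k (n + (N + 1) - k))
    (s := Finset.range (n + (N + 1) + 1)) (fun _ _ => Nat.zero_le _)
    (Finset.mem_range.2 (show N + 1 < n + (N + 1) + 1 by omega))
  simp only [Nat.add_sub_cancel] at hle
  have := hN (hn.trans_le hle)
  omega

theorem continuous_symmD_double (X Y : Set CSet) :
    Continuous fun z : X × Y => symmD (double z.1) z.2 := by
  refine continuous_pi fun n => ?_
  have hx : Continuous fun z : X × Y => double z.1 n := by
    unfold double
    split_ifs
    · exact (continuous_apply _).comp (continuous_subtype_val.comp continuous_fst)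
    · exact continuous_const
  have hy : Continuous fun z : X × Y => (z.2 : CSet) n :=
    (continuous_apply _).comp (continuous_subtype_val.comp continuous_snd)
  exact (continuous_of_discreteTopology (f := fun p : Bool × Bool => xor p.1 p.2)).comp
    (hx.prodMk hy)

theorem le_frakBUS {U : Ultrafilter ℕ} {κ : Cardinal}
    (h : ∀ A : Set CSet, (∀ a ∈ A, InfS a) → #A < κ → UBoundedS U A) : κ ≤ frakBUS U := by
  refine le_csInf ⟨_, {a | InfS a}, fun _ h => h, ?_, rfl⟩ ?_
  · rintro ⟨b, hb, hle⟩
    obtain ⟨a, ha, hab⟩ := exists_infS_le_enum fun n => enum b n + 1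
    have hempty : {n | enum a n ≤ enum b n} = ∅ :=
      Set.eq_empty_of_forall_notMem fun n (hn : enum a n ≤ enum b n) => by
        have := hab n
        omega
    exact U.empty_notMem (hempty ▸ hle a ha)
  · rintro _ ⟨A, hA, hunb, rfl⟩
    by_contra! hlt
    exact hunb (h A hA hlt)

/-- if `cf(𝔡) = 𝔡`, then for each `𝔡`-unbounded `X ⊆ [ω]^ω` there are a
free ultrafilter `U` and a `U`-scale `Y` such that `X × (Y ∪ Fin)` is not Menger. -/
theorem stmt6 (hreg : frakDS.ord.cof = frakDS)
    (X : Set CSet) (hXinf : ∀ x ∈ X, InfS x)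
    (hXcard : frakDS ≤ #X)
    (hXunb : ∀ B ⊆ X, BoundedS B → #B < frakDS) :
    ∃ U : Ultrafilter ℕ, Free U ∧
      ∃ Y : Set CSet, UScaleS U Y ∧ ¬ Menger (↥X × ↥(Y ∪ FinS)) := by
  have hR : frakDS.IsRegular := ⟨aleph0_le_frakDS, hreg.ge⟩
  obtain ⟨D, hD, hDcard⟩ := exists_dominatingS_mk
  let ι := frakDS.ord.ToType
  have hιmk : #ι = frakDS := Cardinal.mk_ord_toType _
  have hIio : ∀ i : ι, #(Set.Iio i) < frakDS := fun i => by
    simpa [ι] using Cardinal.mk_Iio_lt i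
  have hIic : ∀ i : ι, #(Set.Iic i) < frakDS := fun i => by
    rw [← Set.Iio_insert]
    exact Cardinal.mk_insert_le.trans_lt (Cardinal.add_lt_of_lt hR.aleph0_le (hIio i)
      (Cardinal.one_lt_aleph0.trans_le hR.aleph0_le))
  obtain ⟨e⟩ := Cardinal.eq.1 (hιmk.trans hDcard)
  obtain ⟨x, hxX, hcent⟩ := exists_centered_sequence hR hXinf hXcard hXunb hIic
    fun i => enum (e i)
  have hxinf : ∀ i, InfS (x i) := fun i => hXinf _ (hxX i)
  obtain ⟨U, hU, hmem⟩ := exists_free_ultrafilter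
    (fun p : {p : ι × ι // p.1 ≤ p.2} =>
      {n | enum (e p.1.1) n < enum (x p.1.2) (n / 2)}) fun s =>
    (hcent (s.map (Function.Embedding.subtype _)) (by simp +contextual)).mono
      fun n (hn : ∀ p ∈ s.map _, _) p hp => hn p.1 (Finset.mem_map_of_mem _ hp)
  choose d hdinf hd using fun i => exists_infS_le_enum fun n => enum (x i) n + enum (e i) n
  let y : ι → CSet := fun i => uplus (x i) (d i)
  have hyinf : ∀ i, InfS (y i) := fun i => infS_uplus (hdinf i)
  have hle : ∀ a, InfS a → ∃ i, ∀ j, i ≤ j → LeUS U a (y j) := by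
    intro a ha
    obtain ⟨c, hc, hac⟩ := hD.2 a ha
    refine ⟨e.symm ⟨c, hc⟩, fun j hij => ?_⟩
    have hcof : {n | enum a n ≤ enum c n} ∈ U :=
      hU (Filter.mem_cofinite.2 hac)
    filter_upwards [hcof, hmem ⟨(_, j), hij⟩] with n h1 h2
    simp only [Equiv.apply_symm_apply] at h1 h2
    exact h1.trans (h2.le.trans (enum_half_le_enum_uplus (hxinf j) (hdinf j)
      (fun k => (Nat.le_add_right _ _).trans (hd j k)) n))
  have hbU : frakDS ≤ frakBUS U := le_frakBUS fun A hA hAcard => by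
    choose i hi using fun a : A => hle a (hA a a.2)
    have hnot : ¬ IsCofinal (Set.range i) := fun hcof => by
      have h1 := Order.cof_le hcof
      rw [Ordinal.cof_toType, hreg] at h1
      exact (h1.trans Cardinal.mk_range_le).not_gt hAcard
    simp only [IsCofinal, not_forall, not_exists, not_and, not_le] at hnot
    obtain ⟨j, hj⟩ := hnot
    exact ⟨y j, hyinf j, fun a ha => hi ⟨a, ha⟩ j (hj _ ⟨_, rfl⟩).le⟩
  refine ⟨U, hU, Set.range y, ⟨?_, fun b hb => ?_⟩, fun hM => ?_⟩
  · rintro _ ⟨i, rfl⟩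
    exact hyinf i
  · obtain ⟨i, hi⟩ := hle b hb
    have hsub : {z ∈ Set.range y | ¬ LeUS U b z} ⊆ y '' Set.Iio i := by
      rintro _ ⟨⟨j, rfl⟩, hj⟩
      exact ⟨j, not_le.1 fun hij => hj (hi j hij), rfl⟩
    exact ((Cardinal.mk_le_mk_of_subset hsub).trans Cardinal.mk_image_le).trans_lt
      ((hIio i).trans_le hbU)
  · obtain ⟨M, hM⟩ := hM.exists_infinite_enum_lt (continuous_symmD_double _ _) (by
      rintro ⟨⟨z, hz⟩, ⟨_, ⟨i, rfl⟩ | hw⟩⟩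
      · exact infS_symmD_double_uplus z (x i) (hdinf i)
      · exact infS_symmD_double_fin (hXinf z hz) hw)
    obtain ⟨a, ha, hMa⟩ := exists_infS_le_enum M
    obtain ⟨c, hc, hac⟩ := hD.2 a ha
    let i := e.symm ⟨c, hc⟩
    refine hM (⟨x i, hxX i⟩, ⟨y i, Or.inl ⟨i, rfl⟩⟩) (hac.subset fun n hn => ?_)
    have h1 : enum (symmD (double (x i)) (uplus (x i) (d i))) n < M n := hn
    rw [symmD_double_uplus] at h1
    have h2 := enum_le_enum_uplus_empty (hdinf i) n
    have h3 := hd i n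
    have h4 := hMa n
    have h5 : enum (e i) n = enum c n := by simp [i]
    simp only [Set.mem_ofPred_eq, not_le]
    omega
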